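/- Let X, X* ∈ ℝ^{p×p} be symmetric positive semidefinite matrices of rank r, and let 0 ≤ μ' < 1 satisfy ‖X − X*‖_F ≤ μ'·λ_r(X*), where λ_r(X*) denotes the r-th largest eigenvalue of X*. Write X = UΣUᵀ with U ∈ ℝ^{p×r}, UᵀU = I_r, and Σ an r×r diagonal matrix with positive diagonal entries, and let U⊥ ∈ ℝ^{p×(p−r)} be a matrix whose columns form an orthonormal basis of the orthogonal complement of the column space of U. Then for every symmetric S ∈ ℝ^{r×r} and every D ∈ ℝ^{(p−r)×r}, the matrix ξ := U S Uᵀ + U⊥ D Uᵀ + U Dᵀ U⊥ᵀ (a tangent vector at X of the embedded manifold of rank-r positive semidefinite matrices) satisfies ‖ξ‖²_F + 2⟨X − X*, U⊥ D Σ⁻¹ Dᵀ U⊥ᵀ⟩ ≥ (1 − 2μ'/(1 − μ'))·‖ξ‖²_F. (The left-hand side is the Riemannian Hessian quadratic form of X ↦ (1/2)‖X − X*‖²_F on the embedded manifold, evaluated at ξ.) -/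

import Mathlib

open Matrix

/-- Trace inner product `⟨A,B⟩ = tr(AᵀB)`. -/
noncomputable def trInner {m n : ℕ} (A B : Matrix (Fin m) (Fin n) ℝ) : ℝ :=
  ∑ i, ∑ j, A i j * B i j

/-- Frobenius norm. -/
noncomputable def frob {m n : ℕ} (A : Matrix (Fin m) (Fin n) ℝ) : ℝ :=
  Real.sqrt (∑ i, ∑ j, (A i j) ^ 2)

open scoped Classical in
/-- The `i`-th largest eigenvalue (1-indexed, `1 ≤ i ≤ n`) of a Hermitian matrix; junk value 0
otherwise. -/
noncomputable def eigVal {n : ℕ} (A : Matrix (Fin n) (Fin n) ℝ) (i : ℕ) : ℝ :=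
  if hA : A.IsHermitian then
    if h : n - i < n then hA.eigenvalues (Tuple.sort hA.eigenvalues ⟨n - i, h⟩) else 0
  else 0

/-- The `i`-th largest singular value (1-indexed) of `Y`, so `sval Y 1 = ‖Y‖` (spectral norm)
and `sval Y r` is the least singular value. -/
noncomputable def sval {p r : ℕ} (Y : Matrix (Fin p) (Fin r) ℝ) (i : ℕ) : ℝ :=
  Real.sqrt (eigVal (Yᵀ * Y) i)

/-- `Q` is an orthogonal matrix. -/
def IsOrtho {r : ℕ} (Q : Matrix (Fin r) (Fin r) ℝ) : Prop := Qᵀ * Q = 1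

/-- The quotient distance `d(Y₁,Y₂) = min_{Q ∈ O(r)} ‖Y₂Q − Y₁‖_F`. -/
noncomputable def dOrth {p r : ℕ} (Y₁ Y₂ : Matrix (Fin p) (Fin r) ℝ) : ℝ :=
  sInf {c | ∃ Q : Matrix (Fin r) (Fin r) ℝ, IsOrtho Q ∧ c = frob (Y₂ * Q - Y₁)}



lemma frob_sq {m n : ℕ} (A : Matrix (Fin m) (Fin n) ℝ) : frob A ^ 2 = ∑ i, ∑ j, A i j ^ 2 := by
  unfold frob
  exact Real.sq_sqrt (Finset.sum_nonneg fun i _ => Finset.sum_nonneg fun j _ => sq_nonneg _)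

lemma frob_sq_trace {m n : ℕ} (A : Matrix (Fin m) (Fin n) ℝ) :
    frob A ^ 2 = (Aᵀ * A).trace := by
  rw [frob_sq, Finset.sum_comm]
  simp only [Matrix.trace, Matrix.diag, Matrix.mul_apply, Matrix.transpose_apply, sq]

lemma frob_nonneg' {m n : ℕ} (A : Matrix (Fin m) (Fin n) ℝ) : 0 ≤ frob A := Real.sqrt_nonneg _

lemma quad_le {n : ℕ} (E : Matrix (Fin n) (Fin n) ℝ) (w : Fin n → ℝ) :
    |w ⬝ᵥ (E *ᵥ w)| ≤ frob E * (w ⬝ᵥ w) := by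
  have hw : 0 ≤ w ⬝ᵥ w := Finset.sum_nonneg fun i _ => mul_self_nonneg _
  apply abs_le_of_sq_le_sq _ (mul_nonneg (frob_nonneg' E) hw)
  have h1 : w ⬝ᵥ (E *ᵥ w) = ∑ x : Fin n × Fin n, E x.1 x.2 * (w x.1 * w x.2) := by
    rw [Fintype.sum_prod_type]
    simp only [dotProduct, Matrix.mulVec, Finset.mul_sum]
    refine Finset.sum_congr rfl fun i _ => Finset.sum_congr rfl fun j _ => by ring
  have h2 : frob E ^ 2 = ∑ x : Fin n × Fin n, E x.1 x.2 ^ 2 := by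
    rw [frob_sq, Fintype.sum_prod_type]
  have h3 : (w ⬝ᵥ w) ^ 2 = ∑ x : Fin n × Fin n, (w x.1 * w x.2) ^ 2 := by
    rw [Fintype.sum_prod_type, sq]
    simp only [dotProduct, Finset.sum_mul_sum]
    refine Finset.sum_congr rfl fun i _ => Finset.sum_congr rfl fun j _ => by ring
  rw [mul_pow, h1, h2, h3]
  exact Finset.sum_mul_sq_le_sq_mul_sq _ _ _

lemma quad_diag {n m : ℕ} (V : Matrix (Fin n) (Fin m) ℝ) (d : Fin m → ℝ) (v : Fin n → ℝ) :
    v ⬝ᵥ ((V * Matrix.diagonal d * Vᵀ) *ᵥ v) = ∑ j, d j * (Vᵀ *ᵥ v) j ^ 2 := by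
  rw [← Matrix.mulVec_mulVec, ← Matrix.mulVec_mulVec, Matrix.dotProduct_mulVec,
    ← Matrix.mulVec_transpose]
  simp only [dotProduct, Matrix.mulVec_diagonal]
  exact Finset.sum_congr rfl fun i _ => by ring

lemma herm_spectral {n : ℕ} (A : Matrix (Fin n) (Fin n) ℝ) (hA : A.IsHermitian) :
    ∃ V : Matrix (Fin n) (Fin n) ℝ, V * Vᵀ = 1 ∧
      A = V * Matrix.diagonal hA.eigenvalues * Vᵀ := by
  refine ⟨(hA.eigenvectorUnitary : Matrix (Fin n) (Fin n) ℝ), ?_, ?_⟩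
  · have := (Matrix.mem_unitaryGroup_iff).1 hA.eigenvectorUnitary.2
    simpa [Matrix.star_eq_conjTranspose, Matrix.conjTranspose_eq_transpose_of_trivial] using this
  · have := hA.spectral_theorem
    rw [Unitary.conjStarAlgAut_apply] at this
    simpa [Matrix.star_eq_conjTranspose, Matrix.conjTranspose_eq_transpose_of_trivial,
      Function.comp_def] using this

lemma bessel {n m : ℕ} (U : Matrix (Fin n) (Fin m) ℝ) (hU : Uᵀ * U = 1) (v : Fin n → ℝ)
    (i : Fin m) : (Uᵀ *ᵥ v) i ^ 2 ≤ v ⬝ᵥ v := by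
  have h1 : (Uᵀ *ᵥ v) i = ∑ k, U k i * v k := rfl
  have h2 : ∑ k, U k i ^ 2 = 1 := by
    have := congrFun (congrFun hU i) i
    simpa [Matrix.mul_apply, ← sq] using this
  have := Finset.sum_mul_sq_le_sq_mul_sq Finset.univ (fun k => U k i) v
  rw [h2, one_mul] at this
  rw [h1]
  simpa [dotProduct, ← sq] using this

lemma weyl {p r : ℕ} (X Xs : Matrix (Fin p) (Fin p) ℝ) (hrp : r ≤ p) (hXs : Xs.IsHermitian)
    (U : Matrix (Fin p) (Fin r) ℝ) (hU : Uᵀ * U = 1)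
    (dg : Fin r → ℝ) (hdg : ∀ i, 0 < dg i)
    (hdecomp : X = U * Matrix.diagonal dg * Uᵀ) (i : Fin r) :
    eigVal Xs r ≤ dg i + frob (X - Xs) := by
  have hi := i.2
  have hlt : p - r < p := by omega
  obtain ⟨V, hV, hXV⟩ := herm_spectral Xs hXs
  set ev := hXs.eigenvalues with hev
  set σ := Tuple.sort ev with hσ
  have hmono : Monotone (ev ∘ σ) := Tuple.monotone_sort ev
  have heig : eigVal Xs r = ev (σ ⟨p - r, hlt⟩) := by
    unfold eigVal
    rw [dif_pos hXs, dif_pos hlt]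
  let L : (Fin p → ℝ) →ₗ[ℝ] ({j : Fin r // j ≠ i} → ℝ) × (Fin (p - r) → ℝ) :=
    LinearMap.prod
      ((LinearMap.funLeft ℝ ℝ (fun j : {j : Fin r // j ≠ i} => (j : Fin r))).comp Uᵀ.mulVecLin)
      ((LinearMap.funLeft ℝ ℝ
        (fun k : Fin (p - r) => σ ⟨k, by omega⟩)).comp Vᵀ.mulVecLin)
  have hker : LinearMap.ker L ≠ ⊥ := by
    apply LinearMap.ker_ne_bot_of_finrank_lt
    rw [Module.finrank_prod]
    simp
    omega
  obtain ⟨v, hv, hv0⟩ := (Submodule.ne_bot_iff _).1 hker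
  have hv1 : ∀ j : Fin r, j ≠ i → (Uᵀ *ᵥ v) j = 0 := fun j hj =>
    congrFun (congrArg Prod.fst (LinearMap.mem_ker.1 hv)) ⟨j, hj⟩
  have hv2 : ∀ k : Fin (p - r), (Vᵀ *ᵥ v) (σ ⟨k, by omega⟩) = 0 := fun k =>
    congrFun (congrArg Prod.snd (LinearMap.mem_ker.1 hv)) k
  have hvpos : 0 < v ⬝ᵥ v := by
    have h0 : 0 ≤ v ⬝ᵥ v := Finset.sum_nonneg fun i _ => mul_self_nonneg _
    exact lt_of_le_of_ne h0 fun h => hv0 (dotProduct_self_eq_zero.1 h.symm)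
  have hX : v ⬝ᵥ (X *ᵥ v) ≤ dg i * (v ⬝ᵥ v) := by
    rw [hdecomp, quad_diag, Finset.sum_eq_single i]
    · exact mul_le_mul_of_nonneg_left (bessel U hU v i) (hdg i).le
    · intro j _ hj
      rw [hv1 j hj]; ring
    · simp
  have hnorm : v ⬝ᵥ v = ∑ j, (Vᵀ *ᵥ v) j ^ 2 := by
    have := quad_diag V (fun _ => 1) v
    simpa [hV] using this
  have hS : eigVal Xs r * (v ⬝ᵥ v) ≤ v ⬝ᵥ (Xs *ᵥ v) := by
    have e : v ⬝ᵥ (Xs *ᵥ v) = ∑ j, ev j * (Vᵀ *ᵥ v) j ^ 2 := by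
      conv_lhs => rw [hXV]
      exact quad_diag V ev v
    rw [e, hnorm, heig, Finset.mul_sum]
    apply Finset.sum_le_sum
    intro j _
    obtain ⟨k, rfl⟩ := σ.surjective j
    by_cases hk : (k : ℕ) < p - r
    · have := hv2 ⟨k, hk⟩
      simp only [Fin.eta] at this
      rw [this]; simp
    · apply mul_le_mul_of_nonneg_right _ (sq_nonneg _)
      exact hmono (show (⟨p - r, hlt⟩ : Fin p) ≤ k from by
        rw [Fin.le_def]; simpa using hk)
  have hE := (abs_le.1 (quad_le (X - Xs) v)).1
  rw [Matrix.sub_mulVec, dotProduct_sub] at hE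
  have : eigVal Xs r * (v ⬝ᵥ v) ≤ (dg i + frob (X - Xs)) * (v ⬝ᵥ v) := by linarith
  exact le_of_mul_le_mul_right this hvpos

lemma trInner_eq {n m : ℕ} (E : Matrix (Fin n) (Fin n) ℝ) (W : Matrix (Fin n) (Fin m) ℝ)
    (d : Fin m → ℝ) :
    trInner E (W * Matrix.diagonal d * Wᵀ) = ∑ i, d i * (Wᵀ i ⬝ᵥ (E *ᵥ Wᵀ i)) := by
  unfold trInner
  have h : ∀ j k, (W * Matrix.diagonal d * Wᵀ) j k = ∑ i, W j i * d i * W k i := fun j k => by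
    rw [Matrix.mul_apply]
    exact Finset.sum_congr rfl fun i _ => by rw [Matrix.mul_diagonal, Matrix.transpose_apply]
  simp only [h, dotProduct, Matrix.mulVec, Matrix.transpose_apply, Finset.mul_sum]
  conv_lhs =>
    enter [2, a]
    rw [Finset.sum_comm]
  rw [Finset.sum_comm]
  refine Finset.sum_congr rfl fun i _ => ?_
  refine Finset.sum_congr rfl fun j _ => Finset.sum_congr rfl fun k _ => by ring

lemma frob_xi {p r q : ℕ} (U : Matrix (Fin p) (Fin r) ℝ) (hU : Uᵀ * U = 1)
    (P : Matrix (Fin p) (Fin q) ℝ) (hUP : Uᵀ * P = 0)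
    (S : Matrix (Fin r) (Fin r) ℝ) (D : Matrix (Fin q) (Fin r) ℝ) :
    frob (P * D) ^ 2 ≤ frob (U * S * Uᵀ + P * D * Uᵀ + U * Dᵀ * Pᵀ) ^ 2 := by
  have hPU : Pᵀ * U = 0 := by
    have := congrArg Matrix.transpose hUP
    simpa using this
  have hU' : ∀ {k : ℕ} (M : Matrix (Fin r) (Fin k) ℝ), Uᵀ * (U * M) = M := fun M => by
    rw [← Matrix.mul_assoc, hU, Matrix.one_mul]
  have hUP' : ∀ {k : ℕ} (M : Matrix (Fin q) (Fin k) ℝ), Uᵀ * (P * M) = 0 := fun M => by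
    rw [← Matrix.mul_assoc, hUP, Matrix.zero_mul]
  have hPU' : ∀ {k : ℕ} (M : Matrix (Fin r) (Fin k) ℝ), Pᵀ * (U * M) = 0 := fun M => by
    rw [← Matrix.mul_assoc, hPU, Matrix.zero_mul]
  have e : frob (U * S * Uᵀ + P * D * Uᵀ + U * Dᵀ * Pᵀ) ^ 2
      = frob (U * S * Uᵀ) ^ 2 + frob (P * D) ^ 2 + frob (U * Dᵀ * Pᵀ) ^ 2 := by
    have c1 : (P * (D * (S * Uᵀ))).trace = 0 := by
      rw [Matrix.trace_mul_comm]; simp [Matrix.mul_assoc, hUP]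
    have c2 : (U * (Sᵀ * (Dᵀ * Pᵀ))).trace = 0 := by
      rw [Matrix.trace_mul_comm]; simp [Matrix.mul_assoc, hPU]
    have c3 : (U * (Dᵀ * (Pᵀ * (P * (D * Uᵀ))))).trace = (Dᵀ * (Pᵀ * (P * D))).trace := by
      rw [Matrix.trace_mul_comm]; simp [Matrix.mul_assoc, hU]
    simp only [frob_sq_trace, Matrix.transpose_add, Matrix.transpose_mul,
      Matrix.transpose_transpose, Matrix.add_mul, Matrix.mul_add, Matrix.trace_add,
      Matrix.mul_assoc, hU', hUP', hPU', Matrix.mul_zero, Matrix.trace_zero, c1, c2, c3]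
    ring
  rw [e]
  nlinarith [sq_nonneg (frob (U * S * Uᵀ)), sq_nonneg (frob (U * Dᵀ * Pᵀ))]

/-- positive definiteness radius of the Riemannian Hessian under the embedded
geometry: lower bound on the embedded Riemannian Hessian quadratic form of
`X ↦ ½‖X - Xstar‖_F²` at tangent vectors of the manifold of rank-r PSD matrices. -/
theorem stmt18 {p r : ℕ} (hrp : r ≤ p)
    (X Xstar : Matrix (Fin p) (Fin p) ℝ)
    (hXpsd : X.PosSemidef) (hXr : X.rank = r)
    (hXspsd : Xstar.PosSemidef) (hXsr : Xstar.rank = r)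
    (μ' : ℝ) (hμ0 : 0 ≤ μ') (hμ1 : μ' < 1)
    (hclose : frob (X - Xstar) ≤ μ' * eigVal Xstar r)
    (U : Matrix (Fin p) (Fin r) ℝ) (hU : Uᵀ * U = 1)
    (dg : Fin r → ℝ) (hdg : ∀ i, 0 < dg i)
    (hdecomp : X = U * Matrix.diagonal dg * Uᵀ)
    (Uperp : Matrix (Fin p) (Fin (p - r)) ℝ)
    (hUp : Uperpᵀ * Uperp = 1) (hUUp : Uᵀ * Uperp = 0) :
    ∀ S : Matrix (Fin r) (Fin r) ℝ, S.IsSymm →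
      ∀ D : Matrix (Fin (p - r)) (Fin r) ℝ,
        (frob (U * S * Uᵀ + Uperp * D * Uᵀ + U * Dᵀ * Uperpᵀ)) ^ 2 +
            2 * trInner (X - Xstar)
              (Uperp * D * Matrix.diagonal (fun i => (dg i)⁻¹) * Dᵀ * Uperpᵀ) ≥
          (1 - 2 * μ' / (1 - μ')) *
            (frob (U * S * Uᵀ + Uperp * D * Uᵀ + U * Dᵀ * Uperpᵀ)) ^ 2 := by
  intro S _ D
  have hξ := frob_xi U hU Uperp hUUp S D
  set F := frob (U * S * Uᵀ + Uperp * D * Uᵀ + U * Dᵀ * Uperpᵀ) ^ 2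
  have hassoc : Uperp * D * Matrix.diagonal (fun i => (dg i)⁻¹) * Dᵀ * Uperpᵀ
      = (Uperp * D) * Matrix.diagonal (fun i => (dg i)⁻¹) * (Uperp * D)ᵀ := by
    rw [Matrix.transpose_mul, ← Matrix.mul_assoc]
  rw [hassoc, trInner_eq]
  set W := Uperp * D
  have h1 : 0 < 1 - μ' := by linarith
  have hc : 0 ≤ μ' / (1 - μ') := div_nonneg hμ0 h1.le
  have hW : frob W ^ 2 = ∑ i, Wᵀ i ⬝ᵥ Wᵀ i := by
    rw [frob_sq, Finset.sum_comm]
    simp [dotProduct, sq]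
  have key : -(μ' / (1 - μ') * frob W ^ 2) ≤
      ∑ i, (dg i)⁻¹ * (Wᵀ i ⬝ᵥ ((X - Xstar) *ᵥ Wᵀ i)) := by
    rw [hW, Finset.mul_sum, ← Finset.sum_neg_distrib]
    apply Finset.sum_le_sum
    intro i _
    have hq := (abs_le.1 (quad_le (X - Xstar) (Wᵀ i))).1
    have hw : 0 ≤ Wᵀ i ⬝ᵥ Wᵀ i := Finset.sum_nonneg fun i _ => mul_self_nonneg _
    have hwe := weyl X Xstar hrp hXspsd.1 U hU dg hdg hdecomp i
    have hf : (dg i)⁻¹ * frob (X - Xstar) ≤ μ' / (1 - μ') := by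
      rw [inv_mul_eq_div, div_le_div_iff₀ (hdg i) h1]
      nlinarith
    have h2 := mul_le_mul_of_nonneg_left hq (inv_nonneg.2 (hdg i).le)
    have h3 := mul_le_mul_of_nonneg_right hf hw
    linarith
  have h4 := mul_le_mul_of_nonneg_left hξ hc
  have h5 : 2 * μ' / (1 - μ') = 2 * (μ' / (1 - μ')) := by ring
  rw [h5]
  linarith
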